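/- The operators A and B satisfy the commutation relation: for all z, w ∈ ℂ and all k ∈ {2,…,N}, B_k(z) ∘ A(w) = B_k(w) ∘ A(z) ∘ M[β(z-w, λ_1-λ_k)] + A(w) ∘ B_k(z) ∘ M[α(z-w, λ_k-λ_1)], as operators on W-valued functions of λ, where M[f(λ)] denotes pointwise multiplication by the indicated scalar function of λ. -/

import Mathlib

/-!
The relation is one component of the RLL relation for the dynamical R-matrix.

A product `θ(x+y)θ(x-y)` of theta functions is a `2 × 2` minor `P(x)Q(y) - Q(x)P(y)` in two
theta functions of modulus `2τ` (`theta_mul`), so the Plücker relation gives the three-term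
identity `theta_fay`. That identity yields the scalar identities between values of `α` and `β`
which are the matrix entries of the dynamical Yang–Baxter equation (`ybe`).

The matrix `L(z,λ)` is a product of R-matrices. Writing it as an operator `T` defined by recursion
on the number of sites (`T_eq`), and using that each R-matrix preserves weight, the dynamical
Yang–Baxter equation propagates site by site to
`R¹²(z-w, λ-γh) L¹(z, λ) L²(w, λ-γh¹) = L²(w, λ) L¹(z, λ-γh²) R¹²(z-w, λ)` (`rll`).

Applied to `e_k ⊗ e_0 ⊗ ψ` and read off at auxiliary indices `(0, 0)`, the R-matrix on the left is
the identity, while on the right `R(z-w, λ)(e_k ⊗ e_0) = α(z-w, λ_k-λ_0) e_k ⊗ e_0 +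
β(z-w, λ_0-λ_k) e_0 ⊗ e_k`. The two terms are `A(w)B_k(z)` and `B_k(w)A(z)`. The scalars are
evaluated at the unshifted point, which agrees with `M[·]` acting first, since the shift by
`γ(ω_0 + ω_k)` leaves `λ_0 - λ_k` unchanged.
-/

noncomputable section

open Complex BigOperators

namespace Ruijsenaars

/-- Jacobi's first theta function
`θ(z) = -∑_{j∈ℤ} exp(πi(j+1/2)²τ + 2πi(j+1/2)(z+1/2))`. -/
def theta (τ z : ℂ) : ℂ :=
  - ∑' j : ℤ, Complex.exp (Real.pi * Complex.I * ((j : ℂ) + 1 / 2) ^ 2 * τ +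
      2 * Real.pi * Complex.I * ((j : ℂ) + 1 / 2) * (z + 1 / 2))

/-- `α(z,w) = θ(z)θ(w+γ)/(θ(z-γ)θ(w))`. -/
def alpha (τ γ z w : ℂ) : ℂ :=
  theta τ z * theta τ (w + γ) / (theta τ (z - γ) * theta τ w)

/-- `β(z,w) = -θ(z+w)θ(γ)/(θ(z-γ)θ(w))`. -/
def beta (τ γ z w : ℂ) : ℂ :=
  - (theta τ (z + w) * theta τ γ / (theta τ (z - γ) * theta τ w))

/-- The elliptic dynamical R-matrix `R(z,λ)` on `ℂ^N ⊗ ℂ^N`,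
`R(z,λ) = ∑_i e_{ii}⊗e_{ii} + ∑_{i≠j} α(z,λ_i-λ_j) e_{ii}⊗e_{jj}
        + ∑_{i≠j} β(z,λ_i-λ_j) e_{ij}⊗e_{ji}`,
written as a matrix on the standard basis of `ℂ^N ⊗ ℂ^N`: the entry at row `(i,j)`,
column `(k,l)` is the coefficient `R_{ik,jl}(z,λ)` of `e_{ik} ⊗ e_{jl}`. -/
def Rm (τ γ : ℂ) {N : ℕ} (z : ℂ) (lam : Fin N → ℂ) :
    Matrix (Fin N × Fin N) (Fin N × Fin N) ℂ := fun p q =>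
  if p = q then (if p.1 = p.2 then 1 else alpha τ γ z (lam p.1 - lam p.2))
  else if p.1 = q.2 ∧ p.2 = q.1 then beta τ γ z (lam p.1 - lam p.2) else 0

/-- The shift `λ ↦ λ - γ ω_j` by the `j`-th standard basis vector. -/
def shift1 (γ : ℂ) {N : ℕ} (lam : Fin N → ℂ) (j : Fin N) : Fin N → ℂ :=
  fun i => lam i - if i = j then γ else 0

/-- The weight of the basis vector `e_{f 1} ⊗ ⋯ ⊗ e_{f n}` of `W = (ℂ^N)^{⊗n}`:
`wtc f a` is the number of occurrences of the index `a` in `f`. -/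
def wtc {n N : ℕ} (f : Fin n → Fin N) (a : Fin N) : ℕ :=
  (Finset.univ.filter (fun j => f j = a)).card

/-- `R^{(0k)}(z, λ - γ ∑_{j>k} h^{(j)})` acting on `ℂ^N ⊗ W`, `W = (ℂ^N)^{⊗n}`;
it acts as `R(z, λ - γ∑_{j>k} ω_{i_j})` on the factors `0` and `k`. -/
def R0k (τ γ : ℂ) {N n : ℕ} (z : ℂ) (lam : Fin N → ℂ) (k : Fin n) :
    Matrix (Fin N × (Fin n → Fin N)) (Fin N × (Fin n → Fin N)) ℂ := fun p q =>
  if ∀ j, j ≠ k → p.2 j = q.2 j then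
    Rm τ γ z
      (fun i => lam i - γ * (((Finset.univ.filter (fun j => k < j ∧ q.2 j = i)).card : ℕ) : ℂ))
      (p.1, p.2 k) (q.1, q.2 k)
  else 0

/-- `L(z,λ) = R^{(01)}(z, λ-γ∑_{j≥2}h^{(j)}) R^{(02)}(z-γ, ·) ⋯ R^{(0n)}(z-γ(n-1), λ)`
on `ℂ^N ⊗ W`. -/
def Lop (τ γ : ℂ) {N : ℕ} (n : ℕ) (z : ℂ) (lam : Fin N → ℂ) :
    Matrix (Fin N × (Fin n → Fin N)) (Fin N × (Fin n → Fin N)) ℂ :=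
  ((List.finRange n).map (fun k => R0k τ γ (z - γ * (k.1 : ℂ)) lam k)).prod

/-- The matrix elements `L_{ij}(z,λ) ∈ End(W)`, defined by
`L(z,λ)(e_j⊗w) = ∑_i e_i ⊗ L_{ij}(z,λ)w`. -/
def Lent (τ γ : ℂ) {N : ℕ} (n : ℕ) (i j : Fin N) (z : ℂ) (lam : Fin N → ℂ) :
    Matrix (Fin n → Fin N) (Fin n → Fin N) ℂ := fun f g => Lop τ γ n z lam (i, f) (j, g)

/-- The Lax operator entries `ℒ_{ij}(z)` acting on `W`-valued functions of `λ`: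
`(ℒ_{ij}(z)ψ)(λ) = L_{ij}(z,λ) ψ(λ-γω_j)`. -/
def Lax (τ γ : ℂ) {N : ℕ} (n : ℕ) (i j : Fin N) (z : ℂ)
    (ψ : (Fin N → ℂ) → (Fin n → Fin N) → ℂ) : (Fin N → ℂ) → (Fin n → Fin N) → ℂ :=
  fun lam f => ∑ g, Lent τ γ n i j z lam f g * ψ (shift1 γ lam j) g

/-- The transfer matrix `𝒯(z) = ∑_{i=1}^N ℒ_{ii}(z)`. -/
def Transfer (τ γ : ℂ) {N : ℕ} (n : ℕ) (z : ℂ)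
    (ψ : (Fin N → ℂ) → (Fin n → Fin N) → ℂ) : (Fin N → ℂ) → (Fin n → Fin N) → ℂ :=
  fun lam f => ∑ i, Lax τ γ n i i z ψ lam f

/-! ### Theta functions: product formula and three-term relation -/

/-- The theta series `∑ₘ exp(4πi m x + 2πi m² τ)`, the first of the two level-two theta functions
(nome `2τ`) in which products `θ(x+y)θ(x-y)` are expanded. -/
def thP (τ x : ℂ) : ℂ := ∑' m : ℤ, cexp (2 * Real.pi * I * m * (2 * x) + Real.pi * I * m ^ 2 * (2 * τ))

/-- The second level-two theta function: the series `thP` with `m` running over `ℤ + 1/2`. -/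
def thQ (τ x : ℂ) : ℂ := ∑' m : ℤ, cexp (Real.pi * I * τ / 2 + 2 * Real.pi * I * x) *
   cexp (2 * Real.pi * I * m * (2 * x + τ) + Real.pi * I * m ^ 2 * (2 * τ))

theorem summable_gauss {τ : ℂ} (hτ : 0 < τ.im) (x : ℂ) :
    Summable fun m : ℤ => ‖cexp (2 * Real.pi * I * m * x + Real.pi * I * m ^ 2 * τ)‖ :=
  ((summable_jacobiTheta₂_term_iff x τ).2 hτ).norm

/-- `θ` as a Gaussian series in the normalisation of `jacobiTheta₂`. -/
theorem theta_eq (τ z : ℂ) : theta τ z = - ∑' m : ℤ,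
    cexp (Real.pi * I * τ / 4 + Real.pi * I * (z + 1 / 2)) *
      cexp (2 * Real.pi * I * m * (z + 1 / 2 + τ / 2) + Real.pi * I * m ^ 2 * τ) := by
  unfold theta
  congr 2; ext m
  rw [← Complex.exp_add]; congr 1; ring

/-- The splitting of `ℤ × ℤ` by the parity of `j - k`: each half is again a copy of `ℤ × ℤ`, with
`(j, k) = (m + n, m - n - 1)` on the odd half and `(j, k) = (m + n, m - n)` on the even half. -/
def parityEquiv : (ℤ × ℤ) ⊕ (ℤ × ℤ) ≃ ℤ × ℤ where
  toFun := Sum.elim (fun p => (p.1 + p.2, p.1 - p.2 - 1)) (fun p => (p.1 + p.2, p.1 - p.2))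
  invFun q := if (q.1 - q.2) % 2 = 0 then .inr ((q.1 + q.2) / 2, (q.1 - q.2) / 2)
    else .inl ((q.1 + q.2 + 1) / 2, (q.1 - q.2 - 1) / 2)
  left_inv := by
    rintro (⟨m, n⟩ | ⟨m, n⟩)
    · have h : ¬ ((m + n - (m - n - 1)) % 2 = 0) := by omega
      simp only [Sum.elim_inl, h, if_false, Sum.inl.injEq, Prod.mk.injEq]
      omega
    · have h : ((m + n - (m - n)) % 2 = 0) := by omega
      simp only [Sum.elim_inr, h, if_true, Sum.inr.injEq, Prod.mk.injEq]
      omega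
  right_inv := by
    rintro ⟨j, k⟩
    dsimp only
    split_ifs with h
    · simp only [Sum.elim_inr, Prod.mk.injEq]; omega
    · simp only [Sum.elim_inl, Prod.mk.injEq]; omega

/-- The product formula `θ(x+y)θ(x-y) = P(x)Q(y) - Q(x)P(y)`: multiply the two series and change
summation variables to half-sum and half-difference, which separates the Gaussian. -/
theorem theta_mul {τ : ℂ} (hτ : 0 < τ.im) (x y : ℂ) :
    theta τ (x + y) * theta τ (x - y) = thP τ x * thQ τ y - thQ τ x * thP τ y := by
  have h2 : 0 < (2 * τ).im := by simpa using hτ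
  have hP : ∀ x, Summable fun m : ℤ =>
      ‖cexp (2 * Real.pi * I * m * (2 * x) + Real.pi * I * m ^ 2 * (2 * τ))‖ :=
    fun x => summable_gauss h2 _
  have hQ : ∀ x, Summable fun m : ℤ => ‖cexp (Real.pi * I * τ / 2 + 2 * Real.pi * I * x) *
      cexp (2 * Real.pi * I * m * (2 * x + τ) + Real.pi * I * m ^ 2 * (2 * τ))‖ := by
    intro x; simp only [norm_mul]; exact (summable_gauss h2 _).mul_left _
  have hT : ∀ z, Summable fun m : ℤ =>
      ‖cexp (Real.pi * I * τ / 4 + Real.pi * I * (z + 1 / 2)) *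
      cexp (2 * Real.pi * I * m * (z + 1 / 2 + τ / 2) + Real.pi * I * m ^ 2 * τ)‖ := by
    intro z; simp only [norm_mul]; exact (summable_gauss hτ _).mul_left _
  rw [theta_eq, theta_eq, neg_mul_neg, thP, thP, thQ, thQ,
    tsum_mul_tsum_of_summable_norm (hT _) (hT _),
    tsum_mul_tsum_of_summable_norm (hP _) (hQ _),
    tsum_mul_tsum_of_summable_norm (hQ _) (hP _)]
  have hs := summable_mul_of_summable_norm (hT (x + y)) (hT (x - y))
  rw [← parityEquiv.tsum_eq, Summable.tsum_sum]
  rotate_left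
  · exact (parityEquiv.summable_iff.2 hs).comp_injective Sum.inl_injective
  · exact (parityEquiv.summable_iff.2 hs).comp_injective Sum.inr_injective
  refine (congrArg₂ (· + ·) ?_ ?_).trans (sub_eq_add_neg _ _).symm
  · congr 1; ext ⟨m, n⟩
    simp only [parityEquiv, Equiv.coe_fn_mk, Sum.elim_inl, ← Complex.exp_add]
    push_cast
    -- the exponents agree only modulo `2πi`: the shift of the argument of `θ` by `1/2` contributes
    -- `m` full periods
    rw [Complex.exp_eq_exp_iff_exists_int]
    exact ⟨m, by ring⟩
  · rw [← tsum_neg]; congr 1; ext ⟨m, n⟩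
    have : ∀ u : ℂ, - cexp u = cexp (u + Real.pi * I) := by
      intro u; rw [Complex.exp_add, Complex.exp_pi_mul_I]; ring
    simp only [parityEquiv, Equiv.coe_fn_mk, Sum.elim_inr, ← Complex.exp_add]
    rw [this]
    push_cast
    -- the exponents agree only modulo `2πi`: the shift of the argument of `θ` by `1/2` contributes
    -- `m` full periods
    rw [Complex.exp_eq_exp_iff_exists_int]
    exact ⟨m, by ring⟩

/-- The three-term relation for `θ`. By `theta_mul` each factor pair is a `2 × 2` minor of the
`2 × 4` matrix with columns `(P, Q)` at the four points, so this is the Plücker relation. -/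
theorem theta_fay {τ : ℂ} (hτ : 0 < τ.im) (x y z w : ℂ) :
    theta τ (x + y) * theta τ (x - y) * (theta τ (z + w) * theta τ (z - w))
    + theta τ (y + z) * theta τ (y - z) * (theta τ (x + w) * theta τ (x - w))
    + theta τ (z + x) * theta τ (z - x) * (theta τ (y + w) * theta τ (y - w)) = 0 := by
  simp only [theta_mul hτ]; ring

/-- `θ` is odd. If `θ(p) ≠ 0`, the antisymmetry of the right side of `theta_mul` under swapping
`(p + z) / 2` and `(p - z) / 2` gives `θ(p)θ(-z) = -θ(p)θ(z)`. -/
theorem theta_neg {τ : ℂ} (hτ : 0 < τ.im) (z : ℂ) : theta τ (-z) = - theta τ z := by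
  by_cases h : ∀ p, theta τ p = 0
  · simp [h]
  · push Not at h
    obtain ⟨p, hp⟩ := h
    have h1 := theta_mul hτ ((p + z) / 2) ((p - z) / 2)
    have h2 := theta_mul hτ ((p - z) / 2) ((p + z) / 2)
    rw [show (p + z) / 2 + (p - z) / 2 = p by ring,
      show (p + z) / 2 - (p - z) / 2 = z by ring] at h1
    rw [show (p - z) / 2 + (p + z) / 2 = p by ring,
      show (p - z) / 2 - (p + z) / 2 = -z by ring] at h2
    apply mul_left_cancel₀ hp
    linear_combination h1 + h2

/-! ### Scalar identities of the dynamical Yang–Baxter equation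

The suffixes of each lemma name a matrix entry: the row first, then the column, as basis vectors
of the triple tensor product, with distinct letters standing for distinct indices. In the
two-letter patterns `u` is the difference of the parameters at the letter occurring twice and the
other one; in the pattern `abc`, `u` and `v` are `λ_a - λ_b` and `λ_b - λ_c`. After clearing
denominators each identity is a linear combination of at most a few instances of `theta_fay`.
-/

theorem ybe_aab_aba {τ γ : ℂ} (hτ : 0 < τ.im) {z w u : ℂ}
    (hz : theta τ (z - γ) ≠ 0)
    (hw : theta τ (w - γ) ≠ 0)
    (hs : theta τ (z - w - γ) ≠ 0)
    (hu : theta τ u ≠ 0)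
    (hu' : theta τ (u - γ) ≠ 0) :
    alpha τ γ z u * beta τ γ w (u - γ) =
      alpha τ γ w u * beta τ γ z (u - γ) * beta τ γ (z - w) (-u) + beta τ γ w u * alpha τ γ (z - w) u := by
  have h0 : theta τ z * theta τ (z - w - γ) * (theta τ (w + (u - γ)) * theta τ u)
      + theta τ (w + u) * theta τ (-(u - γ)) * (theta τ (z - γ) * theta τ (z - w))
      + theta τ (z + (u - γ)) * theta τ (-(z - w - u)) * (theta τ w * theta τ γ) = 0 := by
    linear_combination (norm := ring_nf) theta_fay hτ (z - (w + γ) / 2) ((w + γ) / 2) (u + (w - γ) / 2) ((w - γ) / 2)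
  simp only [theta_neg hτ] at h0
  simp only [alpha, beta, theta_neg hτ,
    show z - w + -u = z - w - u by ring]
  field_simp
  linear_combination -theta τ γ * theta τ (u + γ) * h0

theorem ybe_aab_baa {τ γ : ℂ} (hτ : 0 < τ.im) {z w u : ℂ}
    (hz : theta τ (z - γ) ≠ 0)
    (hw : theta τ (w - γ) ≠ 0)
    (hs : theta τ (z - w - γ) ≠ 0)
    (hu : theta τ u ≠ 0)
    (hu' : theta τ (u - γ) ≠ 0) :
    beta τ γ z u =
      alpha τ γ w u * beta τ γ z (u - γ) * alpha τ γ (z - w) (-u) + beta τ γ w u * beta τ γ (z - w) u := by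
  have h0 : theta τ (z + u) * theta τ u * (theta τ (w - γ) * theta τ (z - w - γ))
      + theta τ (z - γ) * theta τ γ * (theta τ (w + u) * theta τ (z - w + u))
      + theta τ (z + (u - γ)) * theta τ (-(u + γ)) * (theta τ w * theta τ (z - w)) = 0 := by
    linear_combination (norm := ring_nf) theta_fay hτ (u + z / 2) (z / 2) (z / 2 - γ) (w - z / 2)
  simp only [theta_neg hτ] at h0
  simp only [alpha, beta, theta_neg hτ,
    show -u + γ = -(u - γ) by ring]
  field_simp
  linear_combination -theta τ γ * h0

theorem ybe_aba_aba {τ γ : ℂ} (hτ : 0 < τ.im) {z w u : ℂ}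
    (hz : theta τ (z - γ) ≠ 0)
    (hw : theta τ (w - γ) ≠ 0)
    (hs : theta τ (z - w - γ) ≠ 0)
    (hu : theta τ u ≠ 0)
    (hu' : theta τ (u - γ) ≠ 0) :
    alpha τ γ (z - w) (u - γ) * alpha τ γ w (-(u - γ)) + beta τ γ (z - w) (u - γ) * beta τ γ z (-u) * beta τ γ w (u - γ) =
      alpha τ γ w (-u) * alpha τ γ (z - w) u + beta τ γ w (-u) * beta τ γ z (u - γ) * beta τ γ (z - w) (-u) := by
  have h0 : theta τ u * theta τ u * (theta τ u * theta τ (u - γ - γ))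
      + theta τ (u - γ) * theta τ (-(u - γ)) * (theta τ (u + γ) * theta τ (u - γ))
      + theta τ (2 * u - γ) * theta τ (-γ) * (theta τ γ * theta τ (-γ)) = 0 := by
    linear_combination (norm := ring_nf) theta_fay hτ u 0 (u - γ) γ
  have h1 : theta τ (z + (u - γ)) * theta τ (u - γ) * (theta τ (w - u) * theta τ (z - w - u))
      + theta τ (z - u) * theta τ u * (theta τ (w + (u - γ)) * theta τ (z - w + (u - γ)))
      + theta τ (z - γ) * theta τ (-(2 * u - γ)) * (theta τ w * theta τ (z - w)) = 0 := by
    linear_combination (norm := ring_nf) theta_fay hτ (u - γ + z / 2) (z / 2) (z / 2 - u) (w - z / 2)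
  simp only [theta_neg hτ] at h0 h1
  simp only [alpha, beta, theta_neg hτ,
    show u - γ + γ = u by ring,
    show -(u - γ) + γ = -(u - γ - γ) by ring,
    show -u + γ = -(u - γ) by ring,
    show z - w + -u = z - w - u by ring,
    show w + -u = w - u by ring,
    show z + -u = z - u by ring]
  field_simp
  linear_combination theta τ γ ^ 3 * h1 + theta τ (z - w) * theta τ w * theta τ (z - γ) * h0

theorem ybe_aba_aab {τ γ : ℂ} (hτ : 0 < τ.im) {z w u : ℂ}
    (hz : theta τ (z - γ) ≠ 0)
    (hw : theta τ (w - γ) ≠ 0)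
    (hs : theta τ (z - w - γ) ≠ 0)
    (hu : theta τ u ≠ 0)
    (hu' : theta τ (u - γ) ≠ 0) :
    alpha τ γ (z - w) (u - γ) * beta τ γ w (-(u - γ)) + beta τ γ (z - w) (u - γ) * beta τ γ z (-u) * alpha τ γ w (u - γ) =
      beta τ γ w (-u) * alpha τ γ z (u - γ) := by
  have h0 : theta τ z * theta τ (z - w - γ) * (theta τ (u - γ) * theta τ (w - u))
      + theta τ w * theta τ γ * (theta τ (z - w + (u - γ)) * theta τ (z - u))
      + theta τ (z - γ) * theta τ (-(z - w)) * (theta τ u * theta τ (w - (u - γ))) = 0 := by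
    linear_combination (norm := ring_nf) theta_fay hτ (z - (w + γ) / 2) ((w + γ) / 2) ((w - γ) / 2) (u - (w + γ) / 2)
  simp only [theta_neg hτ] at h0
  simp only [alpha, beta, theta_neg hτ,
    show u - γ + γ = u by ring,
    show w + -(u - γ) = w - (u - γ) by ring,
    show z + -u = z - u by ring,
    show w + -u = w - u by ring]
  field_simp
  linear_combination -theta τ γ * h0

theorem ybe_aba_baa {τ γ : ℂ} (hτ : 0 < τ.im) {z w u : ℂ}
    (hz : theta τ (z - γ) ≠ 0)
    (hw : theta τ (w - γ) ≠ 0)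
    (hs : theta τ (z - w - γ) ≠ 0)
    (hu : theta τ u ≠ 0)
    (hu' : theta τ (u - γ) ≠ 0) :
    beta τ γ (z - w) (u - γ) * alpha τ γ z (-u) =
      alpha τ γ w (-u) * beta τ γ (z - w) u + beta τ γ w (-u) * beta τ γ z (u - γ) * alpha τ γ (z - w) (-u) := by
  have h0 : theta τ z * theta τ (w - γ) * (theta τ (z - w + (u - γ)) * theta τ u)
      + theta τ (z - w + u) * theta τ (-(u - γ)) * (theta τ (z - γ) * theta τ w)
      + theta τ (z + (u - γ)) * theta τ (-(w - u)) * (theta τ (z - w) * theta τ γ) = 0 := by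
    linear_combination (norm := ring_nf) theta_fay hτ ((z + w - γ) / 2) ((z - w + γ) / 2) (u + (z - w - γ) / 2) ((z - w - γ) / 2)
  simp only [theta_neg hτ] at h0
  simp only [alpha, beta, theta_neg hτ,
    show -u + γ = -(u - γ) by ring,
    show w + -u = w - u by ring]
  field_simp
  linear_combination -theta τ γ * h0

theorem ybe_baa_aab {τ γ : ℂ} (hτ : 0 < τ.im) {z w u : ℂ}
    (hz : theta τ (z - γ) ≠ 0)
    (hw : theta τ (w - γ) ≠ 0)
    (hs : theta τ (z - w - γ) ≠ 0)
    (hu : theta τ u ≠ 0)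
    (hu' : theta τ (u - γ) ≠ 0) :
    alpha τ γ (z - w) (-(u - γ)) * beta τ γ z (-u) * alpha τ γ w (u - γ) + beta τ γ (z - w) (-(u - γ)) * beta τ γ w (-(u - γ)) =
      beta τ γ z (-(u - γ)) := by
  have h0 : theta τ (z - (u - γ)) * theta τ (-(u - γ)) * (theta τ (w - γ) * theta τ (z - w - γ))
      + theta τ (z - γ) * theta τ γ * (theta τ (w - (u - γ)) * theta τ (z - w - (u - γ)))
      + theta τ (z - u) * theta τ ((u - γ - γ)) * (theta τ w * theta τ (z - w)) = 0 := by
    linear_combination (norm := ring_nf) theta_fay hτ (γ - u + z / 2) (z / 2) (z / 2 - γ) (w - z / 2)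
  simp only [theta_neg hτ] at h0
  simp only [alpha, beta, theta_neg hτ,
    show u - γ + γ = u by ring,
    show -(u - γ) + γ = -(u - γ - γ) by ring,
    show z - w + -(u - γ) = z - w - (u - γ) by ring,
    show w + -(u - γ) = w - (u - γ) by ring,
    show z + -(u - γ) = z - (u - γ) by ring,
    show z + -u = z - u by ring]
  field_simp
  linear_combination theta τ γ * h0

theorem ybe_baa_aba {τ γ : ℂ} (hτ : 0 < τ.im) {z w u : ℂ}
    (hz : theta τ (z - γ) ≠ 0)
    (hw : theta τ (w - γ) ≠ 0)
    (hs : theta τ (z - w - γ) ≠ 0)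
    (hu : theta τ u ≠ 0)
    (hu' : theta τ (u - γ) ≠ 0) :
    alpha τ γ (z - w) (-(u - γ)) * beta τ γ z (-u) * beta τ γ w (u - γ) + beta τ γ (z - w) (-(u - γ)) * alpha τ γ w (-(u - γ)) =
      alpha τ γ z (-(u - γ)) * beta τ γ (z - w) (-u) := by
  have h0 : theta τ z * theta τ (w - γ) * (theta τ (z - w - u) * theta τ (u - γ))
      + theta τ (z - w) * theta τ γ * (theta τ (z - u) * theta τ (w + (u - γ)))
      + theta τ (z - γ) * theta τ (-w) * (theta τ (z - w - (u - γ)) * theta τ u) = 0 := by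
    linear_combination (norm := ring_nf) theta_fay hτ ((z + w - γ) / 2) ((z - w + γ) / 2) ((z - w - γ) / 2) ((z - w + γ) / 2 - u)
  simp only [theta_neg hτ] at h0
  simp only [alpha, beta, theta_neg hτ,
    show -(u - γ) + γ = -(u - γ - γ) by ring,
    show z - w + -(u - γ) = z - w - (u - γ) by ring,
    show z - w + -u = z - w - u by ring,
    show z + -u = z - u by ring]
  field_simp
  linear_combination -theta τ γ * theta τ (u - γ - γ) * h0

theorem ybe_abc_cba {τ γ : ℂ} (hτ : 0 < τ.im) {z w u v : ℂ}
    (hz : theta τ (z - γ) ≠ 0)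
    (hw : theta τ (w - γ) ≠ 0)
    (hs : theta τ (z - w - γ) ≠ 0)
    (hu : theta τ u ≠ 0)
    (hv : theta τ v ≠ 0)
    (huv : theta τ (u + v) ≠ 0) :
    alpha τ γ (z - w) u * beta τ γ z (u + v) * alpha τ γ w (-u) + beta τ γ (z - w) u * beta τ γ z v * beta τ γ w u =
      alpha τ γ w v * beta τ γ z (u + v) * alpha τ γ (z - w) (-v) + beta τ γ w v * beta τ γ z u * beta τ γ (z - w) v := by
  have h0 : theta τ (u + γ) * theta τ (u - γ) * (theta τ v * theta τ v)
      + theta τ (v + γ) * theta τ (-(v - γ)) * (theta τ u * theta τ u)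
      + theta τ (u + v) * theta τ (-(u - v)) * (theta τ γ * theta τ γ) = 0 := by
    linear_combination (norm := ring_nf) theta_fay hτ u γ v 0
  have h1 : theta τ (z + v) * theta τ v * (theta τ (w + u) * theta τ (z - w + u))
      + theta τ (z + u) * theta τ (-u) * (theta τ (w + v) * theta τ (z - w + v))
      + theta τ (z + u + v) * theta τ (u - v) * (theta τ w * theta τ (z - w)) = 0 := by
    linear_combination (norm := ring_nf) theta_fay hτ (v + z / 2) (z / 2) (u + z / 2) (w - z / 2)
  simp only [theta_neg hτ] at h0 h1
  simp only [alpha, beta, theta_neg hτ,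
    show -u + γ = -(u - γ) by ring,
    show -v + γ = -(v - γ) by ring,
    show z + (u + v) = z + u + v by ring]
  field_simp
  linear_combination -theta τ γ * theta τ (z - w) * theta τ (z + u + v) * theta τ w * h0 - theta τ γ ^ 3 * theta τ (u + v) * h1

theorem ybe_abc_cab {τ γ : ℂ} (hτ : 0 < τ.im) {z w u v : ℂ}
    (hz : theta τ (z - γ) ≠ 0)
    (hw : theta τ (w - γ) ≠ 0)
    (hs : theta τ (z - w - γ) ≠ 0)
    (hu : theta τ u ≠ 0)
    (hv : theta τ v ≠ 0)
    (huv : theta τ (u + v) ≠ 0) :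
    alpha τ γ (z - w) u * beta τ γ z (u + v) * beta τ γ w (-u) + beta τ γ (z - w) u * beta τ γ z v * alpha τ γ w u =
      beta τ γ w v * alpha τ γ z u * beta τ γ (z - w) (u + v) := by
  have h0 : theta τ z * theta τ u * (theta τ (w + v) * theta τ (z - w + u + v))
      + theta τ (z + v) * theta τ (-(u + v)) * (theta τ w * theta τ (z - w + u))
      + theta τ (z + u + v) * theta τ v * (theta τ (w - u) * theta τ (z - w)) = 0 := by
    linear_combination (norm := ring_nf) theta_fay hτ ((z + u) / 2) ((z - u) / 2) (v + (z + u) / 2) (w - (z + u) / 2)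
  simp only [theta_neg hτ] at h0
  simp only [alpha, beta, theta_neg hτ,
    show w + -u = w - u by ring,
    show z + (u + v) = z + u + v by ring,
    show z - w + (u + v) = z - w + u + v by ring]
  field_simp
  linear_combination -theta τ γ ^ 2 * theta τ (u + γ) * h0

theorem ybe_abc_bca {τ γ : ℂ} (hτ : 0 < τ.im) {z w u v : ℂ}
    (hz : theta τ (z - γ) ≠ 0)
    (hw : theta τ (w - γ) ≠ 0)
    (hs : theta τ (z - w - γ) ≠ 0)
    (hu : theta τ u ≠ 0)
    (hv : theta τ v ≠ 0)
    (huv : theta τ (u + v) ≠ 0) :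
    beta τ γ (z - w) u * alpha τ γ z v * beta τ γ w (u + v) =
      alpha τ γ w v * beta τ γ z (u + v) * beta τ γ (z - w) (-v) + beta τ γ w v * beta τ γ z u * alpha τ γ (z - w) v := by
  have h0 : theta τ z * theta τ v * (theta τ (w + u + v) * theta τ (z - w + u))
      + theta τ (z + u) * theta τ (-(u + v)) * (theta τ (w + v) * theta τ (z - w))
      + theta τ (z + u + v) * theta τ u * (theta τ w * theta τ (z - w - v)) = 0 := by
    linear_combination (norm := ring_nf) theta_fay hτ ((z + v) / 2) ((z - v) / 2) (u + (z + v) / 2) (w - (z - v) / 2)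
  simp only [theta_neg hτ] at h0
  simp only [alpha, beta, theta_neg hτ,
    show z - w + -v = z - w - v by ring,
    show z + (u + v) = z + u + v by ring,
    show w + (u + v) = w + u + v by ring]
  field_simp
  linear_combination theta τ γ ^ 2 * theta τ (v + γ) * h0

/-! ### The dynamical Yang–Baxter equation -/

/-- The diagonal coefficient `R_{aa,bb}` of the R-matrix: `1` if `a = b`, else `α(z, λ_a - λ_b)`. -/
def Ad (τ γ : ℂ) {N : ℕ} (z : ℂ) (lam : Fin N → ℂ) (a b : Fin N) : ℂ :=
  if a = b then 1 else alpha τ γ z (lam a - lam b)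

/-- The exchange coefficient `R_{ab,ba}` of the R-matrix for `a ≠ b`, set to `0` for `a = b`, where
the exchange coincides with the identity and is already counted in `Ad`. -/
def Bd (τ γ : ℂ) {N : ℕ} (z : ℂ) (lam : Fin N → ℂ) (a b : Fin N) : ℂ :=
  if a = b then 0 else beta τ γ z (lam a - lam b)

theorem Rm_apply (τ γ : ℂ) {N : ℕ} (z : ℂ) (lam : Fin N → ℂ) (a b c d : Fin N) :
    Rm τ γ z lam (a, b) (c, d) = (if c = a ∧ d = b then Ad τ γ z lam a b else 0)
      + (if c = b ∧ d = a then Bd τ γ z lam a b else 0) := by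
  unfold Rm Ad Bd
  by_cases h : a = b <;> by_cases h1 : a = c <;> by_cases h2 : b = d <;>
    by_cases h3 : a = d <;> by_cases h4 : b = c <;> simp_all [eq_comm]

/-- `α(z,u)` is a function of `z` times a function of `u`, so the second arguments may be swapped. -/
theorem alpha_swap (τ γ z w u v : ℂ) :
    alpha τ γ z u * alpha τ γ w v = alpha τ γ w u * alpha τ γ z v := by
  unfold alpha; ring

/-- The dynamical Yang–Baxter equation
`R¹²(z-w, μ-γh³) R¹³(z, μ) R²³(w, μ-γh¹) = R²³(w, μ) R¹³(z, μ-γh²) R¹²(z-w, μ)`,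
applied to an arbitrary function `F` of three indices and evaluated at `(a, b, c)`. The functions
`G`, `H` are the partial applications of the left side and `K`, `J` those of the right side.
Each `shift1` sits at the index value that the respective factor carries in the row being
evaluated. -/
theorem ybe {τ γ : ℂ} (hτ : 0 < τ.im) {N : ℕ} {z w : ℂ} {mu : Fin N → ℂ}
    (hz : theta τ (z - γ) ≠ 0) (hw : theta τ (w - γ) ≠ 0) (hs : theta τ (z - w - γ) ≠ 0)
    (h0 : ∀ a b, a ≠ b → theta τ (mu a - mu b) ≠ 0)
    (h1 : ∀ a b, a ≠ b → theta τ (mu a - mu b - γ) ≠ 0)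
    (F G H K J : Fin N → Fin N → Fin N → ℂ)
    (hG : ∀ a b c, G a b c = Ad τ γ w (shift1 γ mu a) b c * F a b c
      + Bd τ γ w (shift1 γ mu a) b c * F a c b)
    (hH : ∀ a b c, H a b c = Ad τ γ z mu a c * G a b c + Bd τ γ z mu a c * G c b a)
    (hK : ∀ a b c, K a b c = Ad τ γ (z - w) mu a b * F a b c + Bd τ γ (z - w) mu a b * F b a c)
    (hJ : ∀ a b c, J a b c = Ad τ γ z (shift1 γ mu b) a c * K a b c
      + Bd τ γ z (shift1 γ mu b) a c * K c b a) (a b c : Fin N) :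
    Ad τ γ (z - w) (shift1 γ mu c) a b * H a b c + Bd τ γ (z - w) (shift1 γ mu c) a b * H b a c
      = Ad τ γ w mu b c * J a b c + Bd τ γ w mu b c * J a c b := by
  simp only [hH, hG, hJ, hK]
  have e1 : ∀ a b, a ≠ b → shift1 γ mu a a - shift1 γ mu a b = mu a - mu b - γ := by
    intro a b h; simp [shift1, h.symm]; ring
  have e2 : ∀ a b, a ≠ b → shift1 γ mu a b - shift1 γ mu a a = -(mu a - mu b - γ) := by
    intro a b h; simp [shift1, h.symm]; ring
  have e3 : ∀ a b c, a ≠ c → b ≠ c → shift1 γ mu c a - shift1 γ mu c b = mu a - mu b := by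
    intro a b c h h'; simp [shift1, h, h']
  by_cases hab : a = b
  · subst hab
    by_cases hac : a = c
    · subst hac; simp [Ad, Bd]
    · have hca := Ne.symm hac
      have i1 := ybe_aab_aba hτ hz hw hs (h0 a c hac) (h1 a c hac)
      have i2 := ybe_aab_baa hτ hz hw hs (h0 a c hac) (h1 a c hac)
      have i3 := alpha_swap τ γ z w (mu a - mu c) (mu a - mu c - γ)
      have e : mu c - mu a = -(mu a - mu c) := by ring
      simp only [Ad, Bd, if_true, if_neg hac, if_neg hca, e1 a c hac, e]
      linear_combination F a c a * i1 + F c a a * i2 + F a a c * i3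
  · by_cases hac : a = c
    · subst hac
      have hba := Ne.symm hab
      have i1 := ybe_aba_aba hτ hz hw hs (h0 a b hab) (h1 a b hab)
      have i2 := ybe_aba_aab hτ hz hw hs (h0 a b hab) (h1 a b hab)
      have i3 := ybe_aba_baa hτ hz hw hs (h0 a b hab) (h1 a b hab)
      have e : mu b - mu a = -(mu a - mu b) := by ring
      simp only [Ad, Bd, if_true, if_neg hab, if_neg hba, e1 a b hab, e2 a b hab, e]
      linear_combination F a b a * i1 + F a a b * i2 + F b a a * i3
    · by_cases hbc : b = c
      · subst hbc
        have hba := Ne.symm hab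
        have i1 := ybe_baa_aba hτ hz hw hs (h0 b a hba) (h1 b a hba)
        have i2 := ybe_baa_aab hτ hz hw hs (h0 b a hba) (h1 b a hba)
        have i3 := alpha_swap τ γ (z - w) z (-(mu b - mu a - γ)) (-(mu b - mu a))
        have e : mu a - mu b = -(mu b - mu a) := by ring
        simp only [Ad, Bd, if_true, if_neg hab, if_neg hba, e1 b a hba, e2 b a hba, e]
        linear_combination F b a b * i1 + F b b a * i2 + F a b b * i3
      · have hba := Ne.symm hab
        have hca := Ne.symm hac
        have hcb := Ne.symm hbc
        have i1 := ybe_abc_cba hτ (z := z) (w := w) (u := mu a - mu b) (v := mu b - mu c) hz hw hs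
          (h0 a b hab) (h0 b c hbc) (by simpa using h0 a c hac)
        have i2 := ybe_abc_cab hτ (z := z) (w := w) (u := mu a - mu b) (v := mu b - mu c) hz hw hs
          (h0 a b hab) (h0 b c hbc) (by simpa using h0 a c hac)
        have i3 := ybe_abc_bca hτ (z := z) (w := w) (u := mu a - mu b) (v := mu b - mu c) hz hw hs
          (h0 a b hab) (h0 b c hbc) (by simpa using h0 a c hac)
        have i4 := alpha_swap τ γ z w (mu b - mu c) (mu a - mu c)
        have i5 := alpha_swap τ γ (z - w) z (mu a - mu b) (mu a - mu c)
        simp only [sub_add_sub_cancel, neg_sub] at i1 i2 i3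
        simp only [Ad, Bd, if_neg hab, if_neg hba, if_neg hac,
          if_neg hbc, if_neg hcb, e3 a b c hac hbc, e3 b a c hbc hac, e3 b c a hba hca,
          e3 a c b hab hcb]
        linear_combination F c b a * i1 + F c a b * i2 + F b c a * i3
          + F b a c * beta τ γ (z - w) (mu a - mu b) * i4 + F a c b * beta τ γ w (mu b - mu c) * i5

/-! ### The RLL relation -/

/-- The operator `L(z,λ)` on functions `F` of an auxiliary index and an `n`-tuple, defined by
peeling off the leftmost factor `R^{(01)}(z, λ - γ∑_{j≥2} h^{(j)})`; the entry it
leaves at site `0` is untouched by the remaining factors. The identification with `Lop` is `T_eq`. -/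
def T (τ γ : ℂ) {N : ℕ} : (n : ℕ) → ℂ → (Fin N → ℂ) → (Fin N → (Fin n → Fin N) → ℂ) →
    Fin N → (Fin n → Fin N) → ℂ
  | 0, _, _, F => F
  | n + 1, z, lam, F => fun a f =>
      Ad τ γ z (fun i => lam i - γ * wtc (Fin.tail f) i) a (f 0)
          * T τ γ n (z - γ) lam (fun c g => F c (Fin.cons (f 0) g)) a (Fin.tail f)
        + Bd τ γ z (fun i => lam i - γ * wtc (Fin.tail f) i) a (f 0)
          * T τ γ n (z - γ) lam (fun c g => F c (Fin.cons a g)) (f 0) (Fin.tail f)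

theorem T_add (τ γ : ℂ) {N : ℕ} (n : ℕ) (z : ℂ) (lam : Fin N → ℂ)
    (F G : Fin N → (Fin n → Fin N) → ℂ) (a f) :
    T τ γ n z lam (fun c g => F c g + G c g) a f
      = T τ γ n z lam F a f + T τ γ n z lam G a f := by
  induction n generalizing z a with
  | zero => rfl
  | succ n ih => simp only [T, ih]; ring

theorem wtc_succ {n N : ℕ} (f : Fin (n + 1) → Fin N) (i : Fin N) :
    wtc f i = wtc (Fin.tail f) i + if i = f 0 then 1 else 0 := by
  unfold wtc
  rw [Fin.card_filter_univ_succ]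
  simp only [Fin.tail, eq_comm (a := i)]
  split_ifs <;> rfl

theorem wtc_cons {n N : ℕ} (e : Fin N) (g : Fin n → Fin N) (i : Fin N) :
    wtc (Fin.cons e g : Fin (n + 1) → Fin N) i = wtc g i + if i = e then 1 else 0 := by
  rw [wtc_succ]; simp

/-- The weight of `e_c ⊗ e_g`, auxiliary index included. -/
def wt {n N : ℕ} (c : Fin N) (g : Fin n → Fin N) (i : Fin N) : ℕ :=
  wtc g i + if i = c then 1 else 0

/-- `L(z,λ)` preserves the total weight, hence commutes with multiplication by functions of it. -/
theorem T_smul (τ γ : ℂ) {N : ℕ} (n : ℕ) (z : ℂ) (lam : Fin N → ℂ)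
    (φ : Fin N → (Fin n → Fin N) → ℂ) (hφ : ∀ c g c' g', wt c g = wt c' g' → φ c g = φ c' g')
    (F : Fin N → (Fin n → Fin N) → ℂ) (a f) :
    T τ γ n z lam (fun c g => φ c g * F c g) a f = φ a f * T τ γ n z lam F a f := by
  induction n generalizing z a with
  | zero => rfl
  | succ n ih =>
    have key : ∀ e c (g : Fin n → Fin N) c' g', wt c g = wt c' g' →
        φ c (Fin.cons e g) = φ c' (Fin.cons e g') := by
      intro e c g c' g' h
      apply hφ
      funext i
      have := congrFun h i
      simp only [wt, wtc_cons] at this ⊢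
      omega
    have k2 : φ (f 0) (Fin.cons a (Fin.tail f)) = φ a f := by
      apply hφ
      funext i
      simp only [wt, wtc_cons, wtc_succ f]
      omega
    simp only [T]
    rw [ih (z - γ) (fun c g => φ c (Fin.cons (f 0) g)) (key (f 0)),
      ih (z - γ) (fun c g => φ c (Fin.cons a g)) (key a), k2, Fin.cons_self_tail]
    ring

theorem shift1_wt {γ : ℂ} {n N : ℕ} (lam : Fin N → ℂ) (c : Fin N) (g : Fin n → Fin N) :
    (fun i => shift1 γ lam c i - γ * (wtc g i : ℂ)) = fun i => lam i - γ * (wt c g i : ℂ) := by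
  funext i; simp only [shift1, wt]; push_cast; split_ifs <;> ring

/-- In the product of two copies of `L` of length `n + 1`, with the shift by the first auxiliary
index built in, the leftmost factor of the inner copy moves past the last `n` factors of the outer
copy, because its dynamical argument depends only on the total weight that these preserve. -/
theorem T_T_succ (τ γ : ℂ) {N : ℕ} (n : ℕ) (z w : ℂ) (lam : Fin N → ℂ)
    (G : Fin N → Fin N → (Fin (n + 1) → Fin N) → ℂ) (b₁ b₂ e : Fin N) (f : Fin n → Fin N) :
    T τ γ n z lam (fun c₁ h => T τ γ (n + 1) w (shift1 γ lam c₁) (G c₁) b₂ (Fin.cons e h)) b₁ f =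
      Ad τ γ w (shift1 γ (fun i => lam i - γ * wtc f i) b₁) b₂ e *
        T τ γ n z lam (fun c₁ h => T τ γ n (w - γ) (shift1 γ lam c₁)
          (fun c₂ g => G c₁ c₂ (Fin.cons e g)) b₂ h) b₁ f
      + Bd τ γ w (shift1 γ (fun i => lam i - γ * wtc f i) b₁) b₂ e *
        T τ γ n z lam (fun c₁ h => T τ γ n (w - γ) (shift1 γ lam c₁)
          (fun c₂ g => G c₁ c₂ (Fin.cons b₂ g)) e h) b₁ f := by
  have hs : shift1 γ (fun i => lam i - γ * (wtc f i : ℂ)) b₁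
      = fun i => lam i - γ * (wt b₁ f i : ℂ) := by
    rw [← shift1_wt]; funext i; simp only [shift1]; ring
  simp only [T, Fin.cons_zero, Fin.tail_cons, T_add, shift1_wt, hs]
  congr 1
  · exact T_smul τ γ n z lam (fun c h => Ad τ γ w (fun i => lam i - γ * (wt c h i : ℂ)) b₂ e)
      (by intro c g c' g' h; simp only [h]) _ b₁ f
  · exact T_smul τ γ n z lam (fun c h => Bd τ γ w (fun i => lam i - γ * (wt c h i : ℂ)) b₂ e)
      (by intro c g c' g' h; simp only [h]) _ b₁ f

theorem wtc_le {n N : ℕ} (f : Fin n → Fin N) (i : Fin N) : wtc f i ≤ n := by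
  unfold wtc
  simpa using Finset.card_filter_le (Finset.univ : Finset (Fin n)) (fun j => f j = i)

/-- The relation `R¹²(z-w, λ-γh) L¹(z, λ) L²(w, λ-γh¹) = L²(w, λ) L¹(z, λ-γh²) R¹²(z-w, λ)`,
applied to an arbitrary function `G`. In the inductive step `T_T_succ` isolates the three
R-matrices on the auxiliary spaces and the first quantum space, the dynamical Yang–Baxter
equation reorders them, and the remaining `n` sites are the relation for `n`.
The range of the integers `c` in `hlam` covers all differences of weights of `n`-tuples together
with one further shift. -/
theorem rll {τ γ : ℂ} (hτ : 0 < τ.im) {N : ℕ} (n : ℕ) {z w : ℂ} {lam : Fin N → ℂ}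
    (hlam : ∀ c : ℤ, |c| ≤ n + 1 → ∀ a b, a ≠ b → theta τ (lam a - lam b + c * γ) ≠ 0)
    (hz : ∀ k : ℕ, k < n → theta τ (z - γ * k - γ) ≠ 0)
    (hw : ∀ k : ℕ, k < n → theta τ (w - γ * k - γ) ≠ 0)
    (hs : theta τ (z - w - γ) ≠ 0)
    (G : Fin N → Fin N → (Fin n → Fin N) → ℂ) (a b : Fin N) (f : Fin n → Fin N) :
    Ad τ γ (z - w) (fun i => lam i - γ * wtc f i) a b *
        T τ γ n z lam (fun c₁ h => T τ γ n w (shift1 γ lam c₁) (G c₁) b h) a f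
      + Bd τ γ (z - w) (fun i => lam i - γ * wtc f i) a b *
        T τ γ n z lam (fun c₁ h => T τ γ n w (shift1 γ lam c₁) (G c₁) a h) b f
    = T τ γ n w lam (fun c₂ h => T τ γ n z (shift1 γ lam c₂) (fun c₁ g =>
        Ad τ γ (z - w) lam c₁ c₂ * G c₁ c₂ g + Bd τ γ (z - w) lam c₁ c₂ * G c₂ c₁ g) a h) b f := by
  induction n generalizing z w a b with
  | zero => simp [T, wtc]
  | succ n ih =>
    have hshift : (fun i => lam i - γ * (wtc f i : ℂ))
        = shift1 γ (fun i => lam i - γ * (wtc (Fin.tail f) i : ℂ)) (f 0) := by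
      funext i
      simp only [shift1, wtc_succ f]; push_cast; split_ifs <;> ring
    rw [hshift]
    have hmu : ∀ m : ℤ, |m| ≤ 1 → ∀ a b : Fin N, a ≠ b →
        theta τ ((lam a - γ * (wtc (Fin.tail f) a : ℂ)) -
          (lam b - γ * (wtc (Fin.tail f) b : ℂ)) + m * γ) ≠ 0 := by
      intro m hm a b hab
      have h := hlam (wtc (Fin.tail f) b - wtc (Fin.tail f) a + m) (by
        have h1 := wtc_le (Fin.tail f) a
        have h2 := wtc_le (Fin.tail f) b
        rw [abs_le] at hm ⊢; push_cast; omega) a b hab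
      convert h using 2
      push_cast; ring
    have key := ybe hτ (N := N) (z := z) (w := w)
      (mu := fun i => lam i - γ * (wtc (Fin.tail f) i : ℂ))
      (by simpa using hz 0 (by omega)) (by simpa using hw 0 (by omega)) hs
      (fun a b h => by simpa using hmu 0 (by simp) a b h)
      (fun a b h => by simpa [← sub_eq_add_neg] using hmu (-1) (by simp) a b h)
      (fun b₁ b₂ e => T τ γ n (z - γ) lam (fun c₁ h => T τ γ n (w - γ) (shift1 γ lam c₁)
          (fun c₂ g => G c₁ c₂ (Fin.cons e g)) b₂ h) b₁ (Fin.tail f))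
      (fun b₁ b₂ e => T τ γ n (z - γ) lam (fun c₁ h => T τ γ (n + 1) w (shift1 γ lam c₁)
          (G c₁) b₂ (Fin.cons e h)) b₁ (Fin.tail f))
      _
      (fun b₁ b₂ e => T τ γ n (w - γ) lam (fun c₂ h => T τ γ n (z - γ) (shift1 γ lam c₂)
          (fun c₁ g => Ad τ γ (z - w) lam c₁ c₂ * G c₁ c₂ (Fin.cons e g)
            + Bd τ γ (z - w) lam c₁ c₂ * G c₂ c₁ (Fin.cons e g)) b₁ h) b₂ (Fin.tail f))
      (fun b₁ b₂ e => T τ γ n (w - γ) lam (fun c₂ h => T τ γ (n + 1) z (shift1 γ lam c₂)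
          (fun c₁ g => Ad τ γ (z - w) lam c₁ c₂ * G c₁ c₂ g
            + Bd τ γ (z - w) lam c₁ c₂ * G c₂ c₁ g) b₁ (Fin.cons e h)) b₂ (Fin.tail f))
      (fun b₁ b₂ e => T_T_succ τ γ n (z - γ) w lam G b₁ b₂ e (Fin.tail f))
      (fun _ _ _ => rfl)
      (fun b₁ b₂ e => by
        have h := ih (z := z - γ) (w := w - γ)
          (fun c hc => hlam c (by push_cast; omega))
          (fun k hk => by
            have := hz (k + 1) (by omega)
            convert this using 2; push_cast; ring)
          (fun k hk => by
            have := hw (k + 1) (by omega)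
            convert this using 2; push_cast; ring)
          (by rwa [sub_sub_sub_cancel_right])
          (fun c₁ c₂ g => G c₁ c₂ (Fin.cons e g)) b₁ b₂ (Fin.tail f)
        rw [sub_sub_sub_cancel_right] at h
        exact h.symm)
      (fun b₁ b₂ e => T_T_succ τ γ n (w - γ) z lam (fun c₂ c₁ g =>
          Ad τ γ (z - w) lam c₁ c₂ * G c₁ c₂ g
            + Bd τ γ (z - w) lam c₁ c₂ * G c₂ c₁ g) b₂ b₁ e (Fin.tail f))
      a b (f 0)
    exact key

/-! ### Comparison of the recursive operator with the matrix `Lop` -/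

/-- A row of `R^{(0k)}` has support at the tuple itself and at the tuple with `a` and `f k`
exchanged. -/
theorem R0k_apply (τ γ : ℂ) {N n : ℕ} (z : ℂ) (lam : Fin N → ℂ) (k : Fin n)
    (a : Fin N) (f : Fin n → Fin N) (q : Fin N × (Fin n → Fin N)) :
    R0k τ γ z lam k (a, f) q =
      (if q = (a, f) then Ad τ γ z (fun i => lam i - γ *
        ((Finset.univ.filter (fun j => k < j ∧ f j = i)).card : ℂ)) a (f k) else 0)
      + (if q = (f k, Function.update f k a) then Bd τ γ z (fun i => lam i - γ *
        ((Finset.univ.filter (fun j => k < j ∧ f j = i)).card : ℂ)) a (f k) else 0) := by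
  obtain ⟨c, g⟩ := q
  unfold R0k
  by_cases h : ∀ j, j ≠ k → f j = g j
  · have hcard : ∀ i, (Finset.univ.filter (fun j => k < j ∧ g j = i))
        = (Finset.univ.filter (fun j => k < j ∧ f j = i)) := by
      intro i
      apply Finset.filter_congr
      intro j _
      constructor
      · rintro ⟨h1, h2⟩; exact ⟨h1, (h j h1.ne').trans h2⟩
      · rintro ⟨h1, h2⟩; exact ⟨h1, (h j h1.ne').symm.trans h2⟩
    have hg : ∀ x, g = Function.update f k x ↔ g k = x := by
      intro x
      constructor
      · intro h'; rw [h']; simp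
      · intro h'; funext j
        by_cases hj : j = k
        · subst hj; simp [h']
        · simp [hj, h j hj]
    have hg' : g = f ↔ g k = f k := by
      have := hg (f k); rwa [Function.update_eq_self] at this
    rw [if_pos h]
    simp only [hcard, Rm_apply, Prod.mk.injEq, hg, hg']
  · have h1 : g ≠ f := by rintro rfl; exact h fun _ _ => rfl
    have h2 : g ≠ Function.update f k a := by
      rintro rfl; exact h fun j hj => by simp [hj]
    rw [if_neg h]
    simp [h1, h2]

theorem R0k_mulVec (τ γ : ℂ) {N n : ℕ} (z : ℂ) (lam : Fin N → ℂ) (k : Fin n)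
    (v : Fin N × (Fin n → Fin N) → ℂ) (a : Fin N) (f : Fin n → Fin N) :
    (R0k τ γ z lam k).mulVec v (a, f) =
      Ad τ γ z (fun i => lam i - γ *
        ((Finset.univ.filter (fun j => k < j ∧ f j = i)).card : ℂ)) a (f k) * v (a, f)
      + Bd τ γ z (fun i => lam i - γ *
        ((Finset.univ.filter (fun j => k < j ∧ f j = i)).card : ℂ)) a (f k)
          * v (f k, Function.update f k a) := by
  simp only [Matrix.mulVec, dotProduct, R0k_apply, add_mul, ite_mul, zero_mul,
    Finset.sum_add_distrib, Finset.sum_ite_eq', Finset.mem_univ, if_true]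

/-- The factors of `L` at sites `1, …, n` of an `(n+1)`-tuple leave the entry at site `0` alone and
act on the tail as `L`-factors of length `n` with spectral parameter `z - γ`. -/
theorem prod_succ_mulVec (τ γ : ℂ) {N n : ℕ} (z : ℂ) (lam : Fin N → ℂ) (l : List (Fin n))
    (v : Fin N × (Fin (n + 1) → Fin N) → ℂ) (a : Fin N) (f : Fin (n + 1) → Fin N) :
    ((l.map (fun k => R0k τ γ (z - γ * ((k.succ : Fin (n + 1)).1 : ℂ)) lam k.succ)).prod).mulVec
        v (a, f)
      = ((l.map (fun k => R0k τ γ (z - γ - γ * (k.1 : ℂ)) lam k)).prod).mulVec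
        (fun p => v (p.1, Fin.cons (f 0) p.2)) (a, Fin.tail f) := by
  induction l generalizing a f with
  | nil => simp
  | cons k l ih =>
    have hz : z - γ * ((k.succ : Fin (n + 1)).1 : ℂ) = z - γ - γ * (k.1 : ℂ) := by
      simp only [Fin.val_succ]; push_cast; ring
    have hc : ∀ i, (Finset.univ.filter (fun j => k.succ < j ∧ f j = i)).card
        = (Finset.univ.filter (fun j => k < j ∧ Fin.tail f j = i)).card := by
      intro i
      rw [Fin.card_filter_univ_succ]
      simp [Fin.tail]
      congr!
    simp only [List.map_cons, List.prod_cons, ← Matrix.mulVec_mulVec]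
    rw [R0k_mulVec, R0k_mulVec, ih, ih, hz]
    simp only [hc, Fin.tail_update_succ]
    simp [Fin.tail, Function.update_of_ne (Fin.succ_ne_zero k).symm]

theorem T_eq (τ γ : ℂ) {N : ℕ} (n : ℕ) (z : ℂ) (lam : Fin N → ℂ)
    (F : Fin N → (Fin n → Fin N) → ℂ) (a : Fin N) (f : Fin n → Fin N) :
    T τ γ n z lam F a f = (Lop τ γ n z lam).mulVec (fun p => F p.1 p.2) (a, f) := by
  induction n generalizing z a with
  | zero => simp [T, Lop]
  | succ n ih =>
    have hc : ∀ i, (Finset.univ.filter (fun j => 0 < j ∧ f j = i)).card = wtc (Fin.tail f) i := by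
      intro i
      rw [Fin.card_filter_univ_succ]
      simp [Fin.tail, wtc]
      congr!
    have hu : Fin.tail (Function.update f 0 a) = Fin.tail f := by
      simp
    simp only [T, ih, Lop]
    rw [List.finRange_succ, List.map_cons, List.prod_cons, ← Matrix.mulVec_mulVec, R0k_mulVec,
      List.map_map]
    simp only [Function.comp_def, prod_succ_mulVec, hc, hu]
    simp

/-- `ℒ_{ij}(z)` is `L(z,λ)` applied to `e_j ⊗ ψ(λ - γω_j)`, followed by taking the component at
auxiliary index `i`. -/
theorem Lax_eq (τ γ : ℂ) {N : ℕ} (n : ℕ) (i j : Fin N) (z : ℂ)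
    (ψ : (Fin N → ℂ) → (Fin n → Fin N) → ℂ) (lam : Fin N → ℂ) (f : Fin n → Fin N) :
    Lax τ γ n i j z ψ lam f
      = T τ γ n z lam (fun c g => if c = j then ψ (shift1 γ lam j) g else 0) i f := by
  rw [T_eq]
  simp only [Lax, Lent, Matrix.mulVec, dotProduct, Fintype.sum_prod_type, mul_ite, mul_zero]
  rw [Finset.sum_comm]
  simp

theorem T_zero (τ γ : ℂ) {N : ℕ} (n : ℕ) (z : ℂ) (lam : Fin N → ℂ) (a : Fin N)
    (f : Fin n → Fin N) : T τ γ n z lam (fun _ _ => 0) a f = 0 := by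
  rw [T_eq]
  simp [Matrix.mulVec, dotProduct]

/-! ### The commutation relation -/

/-- the commutation relation of `A(z) = ℒ_{11}(z)` and
`B_k(z) = ℒ_{1k}(z)`:
`B_k(z)A(w) = B_k(w)A(z)M[β(z-w,λ_1-λ_k)] + A(w)B_k(z)M[α(z-w,λ_k-λ_1)]`
(`N = M+2`, `n = Nℓ`; the index `0 : Fin (M+2)` plays the role of `1`),
written pointwise at a generic point `λ`. -/
theorem statement10 (τ γ : ℂ) (hτ : 0 < τ.im) (M ℓ : ℕ) (hℓ : 1 ≤ ℓ)
    (z w : ℂ) (k : Fin (M + 2)) (hk : k ≠ 0)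
    (ψ : (Fin (M + 2) → ℂ) → (Fin ((M + 2) * ℓ) → Fin (M + 2)) → ℂ)
    (lam : Fin (M + 2) → ℂ)
    (hlam : ∀ c : ℤ, |c| ≤ 2 * ((M + 2) * ℓ + 2) →
      ∀ a b : Fin (M + 2), a ≠ b → theta τ (lam a - lam b + c * γ) ≠ 0)
    (hz : ∀ c : ℤ, 1 ≤ c → c ≤ (M + 2) * ℓ + 2 →
      theta τ (z - c * γ) ≠ 0 ∧ theta τ (w - c * γ) ≠ 0 ∧
      theta τ (z - w - c * γ) ≠ 0 ∧ theta τ (z - w + c * γ) ≠ 0) :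
    ∀ f, Lax τ γ ((M + 2) * ℓ) 0 k z (Lax τ γ ((M + 2) * ℓ) 0 0 w ψ) lam f
      = Lax τ γ ((M + 2) * ℓ) 0 k w
          (Lax τ γ ((M + 2) * ℓ) 0 0 z
            (fun l h => beta τ γ (z - w) (l 0 - l k) * ψ l h)) lam f
        + Lax τ γ ((M + 2) * ℓ) 0 0 w
            (Lax τ γ ((M + 2) * ℓ) 0 k z
              (fun l h => alpha τ γ (z - w) (l k - l 0) * ψ l h)) lam f := by
  intro f
  -- the test function of the `RLL` relation: `e_k ⊗ e_0 ⊗ ψ(λ - γω_k - γω_0)`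
  set G : Fin (M + 2) → Fin (M + 2) → (Fin ((M + 2) * ℓ) → Fin (M + 2)) → ℂ := fun c₁ c₂ g =>
    if c₁ = k then (if c₂ = 0 then ψ (shift1 γ (shift1 γ lam k) 0) g else 0) else 0 with hG
  have key := rll hτ ((M + 2) * ℓ) (z := z) (w := w) (lam := lam)
    (fun c hc => hlam c (by push_cast at hc; nlinarith))
    (fun j hj => by
      have h := (hz (j + 1) (by omega) (by
        have : (j : ℤ) < ((M + 2) * ℓ : ℕ) := by exact_mod_cast hj
        push_cast at this; linarith)).1
      convert h using 2; push_cast; ring)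
    (fun j hj => by
      have h := (hz (j + 1) (by omega) (by
        have : (j : ℤ) < ((M + 2) * ℓ : ℕ) := by exact_mod_cast hj
        push_cast at this; linarith)).2.1
      convert h using 2; push_cast; ring)
    (by simpa using (hz 1 le_rfl (by
        have : (0 : ℤ) ≤ (M + 2) * ℓ := by positivity
        linarith)).2.2.1) G 0 0 f
  -- component `(0, 0)`: on the left the R-matrix is the identity there; on the right it maps
  -- `e_k ⊗ e_0` to a combination of `e_k ⊗ e_0` and `e_0 ⊗ e_k`
  have hcomm : shift1 γ (shift1 γ lam 0) k = shift1 γ (shift1 γ lam k) 0 := by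
    funext i; simp only [shift1]; ring
  have hdiff : shift1 γ (shift1 γ lam k) 0 0 - shift1 γ (shift1 γ lam k) 0 k = lam 0 - lam k := by
    simp [shift1, hk, hk.symm]
  have hdiff' : shift1 γ (shift1 γ lam k) 0 k - shift1 γ (shift1 γ lam k) 0 0 = lam k - lam 0 := by
    rw [← neg_sub, hdiff, neg_sub]
  simp only [Ad, Bd, if_true, one_mul, zero_mul, add_zero] at key
  simp only [Lax_eq, hcomm, hdiff, hdiff']
  refine Eq.trans ?_ (key.trans ?_)
  · congr 1
    funext c g
    by_cases hc : c = k
    · subst hc; simp [hG]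
    · simp [hG, hc, T_zero]
  · rw [← T_add]
    congr 1
    funext c g
    by_cases hc : c = k
    · subst hc
      simp only [if_true, if_neg hk, add_zero]
      congr 1
      funext c' g'
      by_cases hc' : c' = 0
      · subst hc'; simp [hG, hk.symm]
      · simp [hG, hc', hk]
    · by_cases hc0 : c = 0
      · subst hc0
        simp only [if_true, if_neg hk.symm, zero_add]
        congr 1
        funext c' g'
        by_cases hc' : c' = k
        · subst hc'; simp [hG, hk, hk.symm]
        · by_cases hc0 : c' = 0 <;> simp [hG, hc', hc0, hk.symm]
      · simp only [if_neg hc, if_neg hc0, add_zero]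
        rw [← T_zero τ γ ((M + 2) * ℓ) z (shift1 γ lam c) 0 g]
        congr 1
        funext c' g'
        simp [hG, hc, hc0]
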